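/- Let A be a unital complex C*-algebra, β > 0, σ a one-parameter group of isometric star-algebra automorphisms of A, and ω a state on A satisfying |ω(a)| ≤ ‖a‖ for all a ∈ A. Let D be a dense subset of A and suppose that for all a, b ∈ D there exists a function F : ℂ → ℂ, differentiable on the open strip {z : 0 < Im z < β}, continuous and bounded on the closed strip {z : 0 ≤ Im z ≤ β}, with F(t) = ω(a * σ(t)(b)) and F(t + I*β) = ω(σ(t)(b) * a) for every t ∈ ℝ. Then the same holds for all a, b ∈ A; that is, ω is a KMS state at inverse temperature β with respect to σ. -/

import Mathlib

/-!
Choose sequences `a n → a` and `b n → b` in `D`, and let `F n` be the analytic function attached to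
`(a n, b n)`. Since each `σ t` is isometric and `ω` is contractive, the boundary values of `F n` on
the two edges of the strip converge uniformly in `t` to `ω (a * σ t b)` and `ω (σ t b * a)`
(`tendstoUniformly_mul_of_norm_eq`). The maximum principle for bounded holomorphic functions on a
strip (`norm_le_of_edges`) turns this into a uniform Cauchy condition on the whole closed strip.
The uniform limit is holomorphic inside, continuous and bounded up to the edges, and has the
required boundary values (`exists_strip_limit`).
-/

open scoped ComplexOrder
open Complex

open Filter Topology

/-- Three-lines theorem with a common bound on both edges: a bounded function on the closed strip,
holomorphic inside, is bounded by its supremum over the edges. -/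
theorem norm_le_of_edges {β : ℝ} (hβ : 0 < β) {F : ℂ → ℂ} {M : ℝ}
    (hd : DifferentiableOn ℂ F {z : ℂ | 0 < z.im ∧ z.im < β})
    (hc : ContinuousOn F {z : ℂ | 0 ≤ z.im ∧ z.im ≤ β})
    (hb : ∃ C : ℝ, ∀ z : ℂ, 0 ≤ z.im → z.im ≤ β → ‖F z‖ ≤ C)
    (h0 : ∀ t : ℝ, ‖F t‖ ≤ M) (h1 : ∀ t : ℝ, ‖F (t + I * β)‖ ≤ M)
    {z : ℂ} (hz0 : 0 ≤ z.im) (hz1 : z.im ≤ β) : ‖F z‖ ≤ M := by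
  have hcl : closure (im ⁻¹' Set.Ioo 0 β) ⊆ {z : ℂ | 0 ≤ z.im ∧ z.im ≤ β} :=
    closure_minimal (fun w hw => ⟨hw.1.le, hw.2.le⟩)
      ((isClosed_le continuous_const continuous_im).inter
        (isClosed_le continuous_im continuous_const))
  obtain ⟨C, hC⟩ := hb
  refine PhragmenLindelof.horizontal_strip (a := 0) (b := β) ⟨hd, hc.mono hcl⟩ ?_ ?_ ?_ hz0 hz1
  · -- a bounded function is dominated by the constant `exp (0 * _)`
    refine ⟨0, by rw [sub_zero]; positivity, 0, Asymptotics.IsBigO.of_bound C ?_⟩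
    filter_upwards [mem_inf_of_right (mem_principal_self _)] with w hw
    simpa using hC w hw.1.le hw.2.le
  · intro w hw
    have : w = (w.re : ℂ) := by apply Complex.ext <;> simp [hw]
    rw [this]
    exact h0 _
  · intro w hw
    have : w = (w.re : ℂ) + I * β := by apply Complex.ext <;> simp [hw]
    rw [this]
    exact h1 _

/-- Uniform convergence on the two edges of the strip propagates to the closed strip, so the
boundary limits are again the edge values of a bounded function holomorphic inside. -/
theorem exists_strip_limit {β : ℝ} (hβ : 0 < β) {F : ℕ → ℂ → ℂ} {f g : ℝ → ℂ}
    (hd : ∀ n, DifferentiableOn ℂ (F n) {z : ℂ | 0 < z.im ∧ z.im < β})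
    (hc : ∀ n, ContinuousOn (F n) {z : ℂ | 0 ≤ z.im ∧ z.im ≤ β})
    (hb : ∀ n, ∃ C : ℝ, ∀ z : ℂ, 0 ≤ z.im → z.im ≤ β → ‖F n z‖ ≤ C)
    (hf : TendstoUniformly (fun n (t : ℝ) => F n t) f atTop)
    (hg : TendstoUniformly (fun n (t : ℝ) => F n (t + I * β)) g atTop) :
    ∃ G : ℂ → ℂ,
      DifferentiableOn ℂ G {z : ℂ | 0 < z.im ∧ z.im < β} ∧
      ContinuousOn G {z : ℂ | 0 ≤ z.im ∧ z.im ≤ β} ∧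
      (∃ C : ℝ, ∀ z : ℂ, 0 ≤ z.im → z.im ≤ β → ‖G z‖ ≤ C) ∧
      (∀ t : ℝ, G t = f t) ∧
      (∀ t : ℝ, G (t + I * β) = g t) := by
  set S : Set ℂ := {z : ℂ | 0 ≤ z.im ∧ z.im ≤ β} with hS
  have hcauchy : UniformCauchySeqOn F atTop S := by
    rw [Metric.uniformCauchySeqOn_iff]
    intro ε hε
    obtain ⟨N, hN⟩ := Metric.uniformCauchySeqOn_iff.1
      (tendstoUniformlyOn_univ.2 hf).uniformCauchySeqOn (ε / 2) (half_pos hε)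
    obtain ⟨N', hN'⟩ := Metric.uniformCauchySeqOn_iff.1
      (tendstoUniformlyOn_univ.2 hg).uniformCauchySeqOn (ε / 2) (half_pos hε)
    refine ⟨max N N', fun m hm n hn z hz => ?_⟩
    rw [dist_eq_norm]
    refine lt_of_le_of_lt ?_ (half_lt_self hε)
    refine norm_le_of_edges (F := fun w => F m w - F n w) hβ ((hd m).sub (hd n))
      ((hc m).sub (hc n)) ?_ (fun t => ?_) (fun t => ?_) hz.1 hz.2
    · obtain ⟨C, hC⟩ := hb m
      obtain ⟨C', hC'⟩ := hb n
      exact ⟨C + C', fun w h0 h1 => (norm_sub_le _ _).trans (add_le_add (hC w h0 h1) (hC' w h0 h1))⟩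
    · rw [← dist_eq_norm]
      exact (hN m (le_of_max_le_left hm) n (le_of_max_le_left hn) t trivial).le
    · rw [← dist_eq_norm]
      exact (hN' m (le_of_max_le_right hm) n (le_of_max_le_right hn) t trivial).le
  have hlim : ∀ z, ∃ w, z ∈ S → Tendsto (fun n => F n z) atTop (𝓝 w) := by
    intro z
    by_cases hz : z ∈ S
    · obtain ⟨w, hw⟩ := cauchySeq_tendsto_of_complete (hcauchy.cauchySeq hz)
      exact ⟨w, fun _ => hw⟩
    · exact ⟨0, fun h => absurd h hz⟩
  choose G hG using hlim
  have hunif : TendstoUniformlyOn F G atTop S := hcauchy.tendstoUniformlyOn_of_tendsto hG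
  have hopen : IsOpen {z : ℂ | 0 < z.im ∧ z.im < β} :=
    (isOpen_lt continuous_const continuous_im).inter (isOpen_lt continuous_im continuous_const)
  refine ⟨G, ?_, hunif.continuousOn (Frequently.of_forall hc), ?_, fun t => ?_, fun t => ?_⟩
  · exact (hunif.mono fun z hz => ⟨hz.1.le, hz.2.le⟩).tendstoLocallyUniformlyOn.differentiableOn
      (Eventually.of_forall hd) hopen
  · obtain ⟨n, hn⟩ := (Metric.tendstoUniformlyOn_iff.1 hunif 1 one_pos).exists
    obtain ⟨C, hC⟩ := hb n
    refine ⟨1 + C, fun z h0 h1 => ?_⟩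
    have h2 := hn z ⟨h0, h1⟩
    rw [dist_eq_norm] at h2
    calc ‖G z‖ = ‖(G z - F n z) + F n z‖ := by rw [sub_add_cancel]
      _ ≤ ‖G z - F n z‖ + ‖F n z‖ := norm_add_le _ _
      _ ≤ 1 + C := add_le_add h2.le (hC z h0 h1)
  · exact tendsto_nhds_unique (hG t ⟨by simp, by simpa using hβ.le⟩) (hf.tendsto_at t)
  · exact tendsto_nhds_unique (hG _ ⟨by simpa using hβ.le, by simp⟩) (hg.tendsto_at t)

/-- Products with norm-preserving maps applied to one factor converge uniformly in the parameter,
in both orders. -/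
theorem tendstoUniformly_mul_of_norm_eq {A : Type*} [NormedRing A] [NormedAlgebra ℂ A] [StarRing A]
    {σ : ℝ → (A ≃⋆ₐ[ℂ] A)} (hiso : ∀ (t : ℝ) (a : A), ‖σ t a‖ = ‖a‖)
    {ω : A →ₗ[ℂ] ℂ} (hω : ∀ a : A, ‖ω a‖ ≤ ‖a‖) {u v : ℕ → A} {a b : A}
    (hu : Tendsto u atTop (𝓝 a)) (hv : Tendsto v atTop (𝓝 b)) :
    TendstoUniformly (fun n t => ω (u n * σ t (v n))) (fun t => ω (a * σ t b)) atTop ∧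
      TendstoUniformly (fun n t => ω (σ t (v n) * u n)) (fun t => ω (σ t b * a)) atTop := by
  have hδ : Tendsto (fun n => ‖a - u n‖ * ‖v n‖ + ‖a‖ * ‖b - v n‖) atTop (𝓝 0) := by
    have h1 := (tendsto_const_nhds (x := a)).sub hu |>.norm.mul hv.norm
    have h2 := ((tendsto_const_nhds (x := b)).sub hv).norm.const_mul ‖a‖
    simpa using h1.add h2
  constructor <;> rw [Metric.tendstoUniformly_iff] <;> intro ε hε <;>
    filter_upwards [hδ.eventually_lt_const hε] with n hn t <;>
    refine lt_of_le_of_lt ?_ hn <;> rw [dist_eq_norm, ← map_sub] <;> refine (hω _).trans ?_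
  · calc ‖a * σ t b - u n * σ t (v n)‖
        = ‖(a - u n) * σ t (v n) + a * σ t (b - v n)‖ := by
          rw [map_sub]; congr 1; noncomm_ring
      _ ≤ ‖a - u n‖ * ‖σ t (v n)‖ + ‖a‖ * ‖σ t (b - v n)‖ :=
          (norm_add_le _ _).trans (add_le_add (norm_mul_le _ _) (norm_mul_le _ _))
      _ = _ := by rw [hiso, hiso]
  · calc ‖σ t b * a - σ t (v n) * u n‖
        = ‖σ t (v n) * (a - u n) + σ t (b - v n) * a‖ := by
          rw [map_sub]; congr 1; noncomm_ring
      _ ≤ ‖σ t (v n)‖ * ‖a - u n‖ + ‖σ t (b - v n)‖ * ‖a‖ :=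
          (norm_add_le _ _).trans (add_le_add (norm_mul_le _ _) (norm_mul_le _ _))
      _ = _ := by rw [hiso, hiso]; ring

/-- If a state satisfies the KMS condition at inverse temperature `β > 0` on a dense subset of
a unital complex C*-algebra, then it satisfies the KMS condition on the whole algebra, i.e. it
is a KMS state. -/
theorem kms_of_dense
    {A : Type*} [NormedRing A] [StarRing A] [CStarRing A] [NormedAlgebra ℂ A]
    [StarModule ℂ A] [CompleteSpace A] [NormOneClass A]
    (β : ℝ) (hβ : 0 < β)
    (σ : ℝ → (A ≃⋆ₐ[ℂ] A))
    (hgroup : ∀ s t : ℝ, ∀ a : A, σ (s + t) a = σ s (σ t a))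
    (hiso : ∀ (t : ℝ) (a : A), ‖σ t a‖ = ‖a‖)
    (ω : A →ₗ[ℂ] ℂ) (hω_one : ω 1 = 1) (hω_pos : ∀ a : A, 0 ≤ ω (star a * a))
    (hω_bound : ∀ a : A, ‖ω a‖ ≤ ‖a‖)
    (D : Set A) (hD : Dense D)
    (hKMS : ∀ a ∈ D, ∀ b ∈ D, ∃ F : ℂ → ℂ,
      DifferentiableOn ℂ F {z : ℂ | 0 < z.im ∧ z.im < β} ∧
      ContinuousOn F {z : ℂ | 0 ≤ z.im ∧ z.im ≤ β} ∧
      (∃ C : ℝ, ∀ z : ℂ, 0 ≤ z.im → z.im ≤ β → ‖F z‖ ≤ C) ∧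
      (∀ t : ℝ, F t = ω (a * σ t b)) ∧
      (∀ t : ℝ, F (t + I * β) = ω (σ t b * a))) :
    ∀ a b : A, ∃ F : ℂ → ℂ,
      DifferentiableOn ℂ F {z : ℂ | 0 < z.im ∧ z.im < β} ∧
      ContinuousOn F {z : ℂ | 0 ≤ z.im ∧ z.im ≤ β} ∧
      (∃ C : ℝ, ∀ z : ℂ, 0 ≤ z.im → z.im ≤ β → ‖F z‖ ≤ C) ∧
      (∀ t : ℝ, F t = ω (a * σ t b)) ∧
      (∀ t : ℝ, F (t + I * β) = ω (σ t b * a)) := by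
  intro a b
  obtain ⟨u, huD, hu⟩ := mem_closure_iff_seq_limit.1 (hD a)
  obtain ⟨v, hvD, hv⟩ := mem_closure_iff_seq_limit.1 (hD b)
  choose F hd hc hb h0 h1 using fun n => hKMS (u n) (huD n) (v n) (hvD n)
  obtain ⟨hf, hg⟩ := tendstoUniformly_mul_of_norm_eq hiso hω_bound hu hv
  refine exists_strip_limit hβ hd hc hb ?_ ?_
  · simpa only [h0] using hf
  · simpa only [h1] using hg
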